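/- Let f : ℝ² → ℝ² be a C^∞ map with f(0)=0 which has corank one at 0, let λ be its Jacobian determinant, and let η be any null vector field for f. Then j⁴f(0) is A⁴-equivalent to the 4-jet at 0 of (x,y) ↦ (x, x²y + y⁴) if and only if dλ(0) = 0, the Hessian matrix H_λ(0) has rank 1, (η²λ)(0) = 0, and (η³λ)(0) ≠ 0. -/

import Mathlib

open Filter Topology

noncomputable section

/-- Directional derivative of a scalar function. -/
def dop (v : ℝ × ℝ) (g : ℝ × ℝ → ℝ) : ℝ × ℝ → ℝ :=
  fun p => fderiv ℝ g p v

/-- Partial derivative operator in the first coordinate. -/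
def pdx : (ℝ × ℝ → ℝ) → ℝ × ℝ → ℝ := dop (1, 0)

/-- Partial derivative operator in the second coordinate. -/
def pdy : (ℝ × ℝ → ℝ) → ℝ × ℝ → ℝ := dop (0, 1)

/-- Taylor coefficient `a_{ij} = ∂_x^i ∂_y^j g(0,0) / (i! j!)` of `g` at the origin. -/
def tcoeff (g : ℝ × ℝ → ℝ) (i j : ℕ) : ℝ :=
  (pdx^[i] (pdy^[j] g)) 0 / (Nat.factorial i * Nat.factorial j)

/-- The Jacobian determinant `λ_f` of a map `f : ℝ² → ℝ²`. -/
def jacDet (f : ℝ × ℝ → ℝ × ℝ) (p : ℝ × ℝ) : ℝ :=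
  (fderiv ℝ f p (1, 0)).1 * (fderiv ℝ f p (0, 1)).2 -
    (fderiv ℝ f p (1, 0)).2 * (fderiv ℝ f p (0, 1)).1

/-- `f` has corank one at `0` : the derivative of `f` at `0` has rank one. -/
def CorankOne (f : ℝ × ℝ → ℝ × ℝ) : Prop :=
  LinearMap.rank ((fderiv ℝ f 0).toLinearMap) = 1

/-- `η` is a null vector field for `f` near `0`. -/
def IsNullVF (f η : ℝ × ℝ → ℝ × ℝ) : Prop :=
  η 0 ≠ 0 ∧ ∃ U ∈ 𝓝 (0 : ℝ × ℝ),
    ContDiffOn ℝ (⊤ : ℕ∞) η U ∧ ∀ p ∈ U, jacDet f p = 0 → fderiv ℝ f p (η p) = 0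

/-- The derivative `(ηg)(p) = Dg(p)(η(p))` of `g` along the vector field `η`. -/
def etaD (η : ℝ × ℝ → ℝ × ℝ) (g : ℝ × ℝ → ℝ) : ℝ × ℝ → ℝ :=
  fun p => fderiv ℝ g p (η p)

/-- The iterated derivative `η^k g` along the vector field `η`. -/
def etaIter (η : ℝ × ℝ → ℝ × ℝ) : ℕ → (ℝ × ℝ → ℝ) → ℝ × ℝ → ℝ
  | 0, g => g
  | k + 1, g => etaD η (etaIter η k g)

/-- The Hessian matrix of second partial derivatives of `g` at `0`. -/
def hess (g : ℝ × ℝ → ℝ) : Matrix (Fin 2) (Fin 2) ℝ :=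
  !![pdx (pdx g) 0, pdx (pdy g) 0; pdy (pdx g) 0, pdy (pdy g) 0]

/-- `A^r`-equivalence of the `r`-jets at `0` of two map-germs `(ℝ²,0) → (ℝ²,0)`. -/
def JetEquiv (r : ℕ) (f g : ℝ × ℝ → ℝ × ℝ) : Prop :=
  ∃ φ ψ : ℝ × ℝ → ℝ × ℝ,
    ContDiff ℝ (⊤ : ℕ∞) φ ∧ ContDiff ℝ (⊤ : ℕ∞) ψ ∧ φ 0 = 0 ∧ ψ 0 = 0 ∧
    Function.Bijective (⇑(fderiv ℝ φ 0)) ∧ Function.Bijective (⇑(fderiv ℝ ψ 0)) ∧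
    ∀ i ≤ r, iteratedFDeriv ℝ i (ψ ∘ f ∘ φ) 0 = iteratedFDeriv ℝ i g 0

/-- `A`-equivalence of two map-germs `(ℝ²,0) → (ℝ²,0)`. -/
def AEquiv (f g : ℝ × ℝ → ℝ × ℝ) : Prop :=
  ∃ φ ψ : ℝ × ℝ → ℝ × ℝ,
    ContDiff ℝ (⊤ : ℕ∞) φ ∧ ContDiff ℝ (⊤ : ℕ∞) ψ ∧ φ 0 = 0 ∧ ψ 0 = 0 ∧
    Function.Bijective (⇑(fderiv ℝ φ 0)) ∧ Function.Bijective (⇑(fderiv ℝ ψ 0)) ∧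
    ∀ᶠ p in 𝓝 (0 : ℝ × ℝ), ψ (f (φ p)) = g p

/-- `f` has the form `(x, g(x,y))` where `g` is `C^∞` and the Taylor coefficients of `g`
of total degree `< N` at the origin are prescribed by `P`. -/
def HasForm (f : ℝ × ℝ → ℝ × ℝ) (g : ℝ × ℝ → ℝ) (N : ℕ) (P : ℕ → ℕ → ℝ) : Prop :=
  ContDiff ℝ (⊤ : ℕ∞) g ∧ (∀ p, f p = (p.1, g p)) ∧
    ∀ i j, i + j < N → tcoeff g i j = P i j

/-! The condition on `λ_f` says that `λ_f` has a singularity of type `A₂` whose Hessian has as its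
kernel the line `ker Df(0)`: at a critical zero of `λ_f`, the values `(η²λ)(0)` and `(η³λ)(0)` only
involve the vector `v = η(0)`, being `D²λ(0)(v, v)` and, once `D²λ(0)v = 0`, `D³λ(0)(v, v, v)`. This
only depends on the 3-jet of `λ_f`, hence on the 4-jet of `f`, and it is invariant under coordinate
changes because `λ_{ψ∘f∘φ}` is a nonvanishing function times `λ_f ∘ φ`.

Conversely, straighten `f` to `(x, G(x, y))`, so that `λ = ∂G/∂y`. The condition leaves in the
4-jet of `G`, besides powers of `x`, only `x²y`, `x³y`, `x²y²`, `xy³` and `y⁴`, the first and last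
with nonzero coefficient. A substitution `y ↦ sx + ty + βxy + γy²` removes `xy³`, `x³y` and `x²y²`,
and changing the second target coordinate by a function of `x` and a scaling does the rest. -/

open scoped ContDiff

section VanishesToOrder

variable {E F G : Type*} [NormedAddCommGroup E] [NormedSpace ℝ E]
  [NormedAddCommGroup F] [NormedSpace ℝ F] [NormedAddCommGroup G] [NormedSpace ℝ G]

/-- Membership in the `n`-th power of the maximal ideal of smooth germs at `0`: a smooth map all
of whose derivatives of order `< n` vanish at `0`. Smoothness is bundled, so that `n = 0` says
only that the map is smooth. -/
structure VanishesToOrder (n : ℕ) (h : E → F) : Prop where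
  contDiff : ContDiff ℝ ∞ h
  iteratedFDeriv_eq_zero : ∀ i < n, iteratedFDeriv ℝ i h 0 = 0

namespace VanishesToOrder

theorem of_contDiff {h : E → F} (hh : ContDiff ℝ ∞ h) : VanishesToOrder 0 h :=
  ⟨hh, fun _ hi => absurd hi (Nat.not_lt_zero _)⟩

theorem mono {m n : ℕ} {h : E → F} (hh : VanishesToOrder n h) (hmn : m ≤ n) :
    VanishesToOrder m h :=
  ⟨hh.contDiff, fun i hi => hh.iteratedFDeriv_eq_zero i (hi.trans_le hmn)⟩

theorem apply_zero {n : ℕ} {h : E → F} (hh : VanishesToOrder (n + 1) h) : h 0 = 0 := by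
  have h0 := hh.iteratedFDeriv_eq_zero 0 n.succ_pos
  rwa [← norm_eq_zero, norm_iteratedFDeriv_zero, norm_eq_zero] at h0

theorem add {n : ℕ} {a b : E → F} (ha : VanishesToOrder n a) (hb : VanishesToOrder n b) :
    VanishesToOrder n (a + b) := by
  refine ⟨ha.contDiff.add hb.contDiff, fun i hi => ?_⟩
  rw [iteratedFDeriv_add (ha.contDiff.of_le (mod_cast le_top))
    (hb.contDiff.of_le (mod_cast le_top)), Pi.add_apply, ha.iteratedFDeriv_eq_zero i hi,
    hb.iteratedFDeriv_eq_zero i hi, add_zero]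

theorem mul {m n : ℕ} {a b : E → ℝ} (ha : VanishesToOrder m a) (hb : VanishesToOrder n b) :
    VanishesToOrder (m + n) (a * b) := by
  refine ⟨ha.contDiff.mul hb.contDiff, fun i hi => ?_⟩
  rw [← norm_le_zero_iff]
  refine (norm_iteratedFDeriv_mul_le ha.contDiff hb.contDiff 0 (mod_cast le_top)).trans_eq
    (Finset.sum_eq_zero fun k hki => ?_)
  rw [Finset.mem_range] at hki
  rcases lt_or_ge k m with hk | hk
  · rw [ha.iteratedFDeriv_eq_zero k hk, norm_zero, mul_zero, zero_mul]
  · rw [hb.iteratedFDeriv_eq_zero (i - k) (by omega), norm_zero, mul_zero]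

theorem clm_comp {n : ℕ} {h : E → F} (L : F →L[ℝ] G) (hh : VanishesToOrder n h) :
    VanishesToOrder n (L ∘ h) := by
  refine ⟨L.contDiff.comp hh.contDiff, fun i hi => ?_⟩
  rw [L.iteratedFDeriv_comp_left hh.contDiff.contDiffAt (mod_cast le_top),
    hh.iteratedFDeriv_eq_zero i hi]
  ext
  simp

theorem comp {n : ℕ} {h : F → G} {φ : E → F} (hh : VanishesToOrder n h) (hφ : ContDiff ℝ ∞ φ)
    (hφ0 : φ 0 = 0) : VanishesToOrder n (h ∘ φ) := by
  refine ⟨hh.contDiff.comp hφ, fun i hi => ?_⟩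
  rw [iteratedFDeriv_comp hh.contDiff.contDiffAt hφ.contDiffAt (mod_cast le_top : (i : ℕ∞ω) ≤ ∞),
    hφ0]
  refine Finset.sum_eq_zero fun c _ => ?_
  ext
  simp [FormalMultilinearSeries.compAlongOrderedFinpartition, ftaylorSeries,
    hh.iteratedFDeriv_eq_zero c.length (c.length_le.trans_lt hi)]

end VanishesToOrder

theorem vanishesToOrder_succ_iff {n : ℕ} {h : E → F} (hh : ContDiff ℝ ∞ h) :
    VanishesToOrder (n + 1) h ↔ h 0 = 0 ∧ VanishesToOrder n (fderiv ℝ h) := by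
  refine ⟨fun H => ⟨H.apply_zero, (contDiff_infty_iff_fderiv.1 hh).2, fun i hi => ?_⟩,
    fun ⟨h0, H⟩ => ⟨hh, fun i hi => ?_⟩⟩
  · rw [← norm_eq_zero, norm_iteratedFDeriv_fderiv,
      H.iteratedFDeriv_eq_zero (i + 1) (Nat.succ_lt_succ hi), norm_zero]
  · rw [← norm_eq_zero]
    cases i with
    | zero => rw [norm_iteratedFDeriv_zero, h0, norm_zero]
    | succ i =>
      rw [← norm_iteratedFDeriv_fderiv,
        H.iteratedFDeriv_eq_zero i (Nat.lt_of_succ_lt_succ hi), norm_zero]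

theorem VanishesToOrder.of_apply_zero {h : E → F} (hh : ContDiff ℝ ∞ h) (h0 : h 0 = 0) :
    VanishesToOrder 1 h :=
  (vanishesToOrder_succ_iff hh).2 ⟨h0, of_contDiff (contDiff_infty_iff_fderiv.1 hh).2⟩

theorem VanishesToOrder.fderiv_sub {n : ℕ} {a b : E → F} (ha : ContDiff ℝ ∞ a)
    (hb : ContDiff ℝ ∞ b) (hab : VanishesToOrder (n + 1) (a - b)) :
    VanishesToOrder n (fderiv ℝ a - fderiv ℝ b) := by
  have hfd : fderiv ℝ (a - b) = fderiv ℝ a - fderiv ℝ b := funext fun p =>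
    _root_.fderiv_sub ((ha.differentiable (by simp)) p) ((hb.differentiable (by simp)) p)
  exact hfd ▸ ((vanishesToOrder_succ_iff (ha.sub hb)).1 hab).2

theorem vanishesToOrder_sub_iff {r : ℕ} {a b : E → F} (ha : ContDiff ℝ ∞ a)
    (hb : ContDiff ℝ ∞ b) :
    VanishesToOrder (r + 1) (a - b) ↔ ∀ i ≤ r, iteratedFDeriv ℝ i a 0 = iteratedFDeriv ℝ i b 0 := by
  have hsub (i : ℕ) :
      iteratedFDeriv ℝ i (a - b) 0 = iteratedFDeriv ℝ i a 0 - iteratedFDeriv ℝ i b 0 := by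
    rw [iteratedFDeriv_sub (ha.of_le (mod_cast le_top)) (hb.of_le (mod_cast le_top)), Pi.sub_apply]
  simp_rw [← sub_eq_zero (b := iteratedFDeriv ℝ _ b 0), ← hsub]
  exact ⟨fun H i hi => H.iteratedFDeriv_eq_zero i (Nat.lt_succ_of_le hi),
    fun H => ⟨ha.sub hb, fun i hi => H i (Nat.le_of_lt_succ hi)⟩⟩

end VanishesToOrder

section dirDeriv

variable {E F G : Type*} [NormedAddCommGroup E] [NormedSpace ℝ E]
  [NormedAddCommGroup F] [NormedSpace ℝ F] [NormedAddCommGroup G] [NormedSpace ℝ G]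

/-- The derivative `Xg` of a vector-valued map `g` along the vector field `X`. The operator `etaD`
is the case of real-valued functions on the plane. -/
def dirDeriv (X : E → E) (g : E → F) : E → F :=
  fun p => fderiv ℝ g p (X p)

theorem dirDeriv_add {X : E → E} {a b : E → F} {x : E} (ha : DifferentiableAt ℝ a x)
    (hb : DifferentiableAt ℝ b x) :
    dirDeriv X (fun p => a p + b p) x = dirDeriv X a x + dirDeriv X b x := by
  simp only [dirDeriv, fderiv_fun_add ha hb, add_apply]

theorem dirDeriv_mul {X : E → E} {a b : E → ℝ} {x : E} (ha : DifferentiableAt ℝ a x)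
    (hb : DifferentiableAt ℝ b x) :
    dirDeriv X (fun p => a p * b p) x = a x * dirDeriv X b x + dirDeriv X a x * b x := by
  simp only [dirDeriv, fderiv_fun_mul ha hb, add_apply, smul_apply, smul_eq_mul, mul_comm]

theorem dirDeriv_comp {X : E → E} {χ : E → F} {g : F → G} {x : E}
    (hg : DifferentiableAt ℝ g (χ x)) (hχ : DifferentiableAt ℝ χ x) :
    dirDeriv X (fun p => g (χ p)) x = fderiv ℝ g (χ x) (dirDeriv X χ x) := by
  rw [dirDeriv, fderiv_fun_comp x hg hχ, ContinuousLinearMap.comp_apply, dirDeriv]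

theorem dirDeriv_clm_apply {X : E → E} {c : E → F →L[ℝ] G} {u : E → F} {x : E}
    (hc : DifferentiableAt ℝ c x) (hu : DifferentiableAt ℝ u x) :
    dirDeriv X (fun p => c p (u p)) x = dirDeriv X c x (u x) + c x (dirDeriv X u x) := by
  simp only [dirDeriv, fderiv_clm_apply hc hu, add_apply,
    ContinuousLinearMap.comp_apply, ContinuousLinearMap.flip_apply, add_comm]

theorem dirDeriv_dirDeriv_comp {X : E → E} {χ : E → F} {g : F → G} {x : E}
    (hg : ContDiff ℝ ∞ g) (hχ : ContDiff ℝ ∞ χ) (hX : ContDiffAt ℝ 1 X x) :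
    dirDeriv X (dirDeriv X (fun p => g (χ p))) x =
      fderiv ℝ (fderiv ℝ g) (χ x) (dirDeriv X χ x) (dirDeriv X χ x) +
        fderiv ℝ g (χ x) (dirDeriv X (dirDeriv X χ) x) := by
  obtain ⟨hgd, hDg⟩ := contDiff_infty_iff_fderiv.1 hg
  obtain ⟨hχd, hDχ⟩ := contDiff_infty_iff_fderiv.1 hχ
  have hY : ContDiffAt ℝ 1 (dirDeriv X χ) x :=
    (hDχ.of_le ENat.LEInfty.out).contDiffAt.clm_apply hX
  have hfirst : dirDeriv X (fun p => g (χ p)) = fun p => fderiv ℝ g (χ p) (dirDeriv X χ p) :=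
    funext fun p => dirDeriv_comp (hgd _) (hχd p)
  rw [hfirst, dirDeriv_clm_apply (c := fun p => fderiv ℝ g (χ p))
    ((hDg.comp hχ).differentiable (by simp) x) (hY.differentiableAt one_ne_zero),
    dirDeriv_comp (hDg.differentiable (by simp) _) (hχd x)]

theorem dirDeriv_dirDeriv_dirDeriv_comp {X : E → E} {χ : E → F} {g : F → G} {x : E}
    (hg : ContDiff ℝ ∞ g) (hχ : ContDiff ℝ ∞ χ) (hX : ContDiffAt ℝ 2 X x)
    (h1 : fderiv ℝ g (χ x) = 0)
    (h2 : fderiv ℝ (fderiv ℝ g) (χ x) (dirDeriv X χ x) = 0) :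
    dirDeriv X (dirDeriv X (dirDeriv X (fun p => g (χ p)))) x =
      fderiv ℝ (fderiv ℝ (fderiv ℝ g)) (χ x) (dirDeriv X χ x) (dirDeriv X χ x)
        (dirDeriv X χ x) := by
  set Y := dirDeriv X χ with hYdef
  obtain ⟨-, hDg⟩ := contDiff_infty_iff_fderiv.1 hg
  obtain ⟨hDgd, hDDg⟩ := contDiff_infty_iff_fderiv.1 hDg
  obtain ⟨hχd, hDχ⟩ := contDiff_infty_iff_fderiv.1 hχ
  have hY : ContDiffAt ℝ 2 Y x :=
    (hDχ.of_le ENat.LEInfty.out).contDiffAt.clm_apply hX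
  have hY' : DifferentiableAt ℝ (dirDeriv X Y) x :=
    ((hY.fderiv_right one_add_one_eq_two.le).differentiableAt one_ne_zero).clm_apply
      (hX.differentiableAt two_ne_zero)
  have hYd : DifferentiableAt ℝ Y x := hY.differentiableAt two_ne_zero
  have hsymm : fderiv ℝ (fderiv ℝ g) (χ x) (dirDeriv X Y x) (Y x) = 0 := by
    rw [hg.contDiffAt.isSymmSndFDerivAt (by simpa using ENat.LEInfty.out), h2, zero_apply]
  have hsecond : dirDeriv X (dirDeriv X (fun p => g (χ p))) =ᶠ[𝓝 x] fun p =>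
      fderiv ℝ (fderiv ℝ g) (χ p) (Y p) (Y p) + fderiv ℝ g (χ p) (dirDeriv X Y p) :=
    ((hX.of_le one_le_two).eventually (by simp)).mono fun p hp => dirDeriv_dirDeriv_comp hg hχ hp
  have hA : DifferentiableAt ℝ (fun p => fderiv ℝ (fderiv ℝ g) (χ p)) x :=
    (hDDg.comp hχ).differentiable (by simp) x
  have hB : DifferentiableAt ℝ (fun p => fderiv ℝ g (χ p)) x :=
    (hDg.comp hχ).differentiable (by simp) x
  rw [dirDeriv, hsecond.fderiv_eq, ← dirDeriv,
    dirDeriv_add ((hA.clm_apply hYd).clm_apply hYd) (hB.clm_apply hY'),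
    dirDeriv_clm_apply (hA.clm_apply hYd) hYd, dirDeriv_clm_apply hA hYd,
    dirDeriv_clm_apply hB hY', dirDeriv_comp (hDDg.differentiable (by simp) _) (hχd x),
    dirDeriv_comp (hDgd _) (hχd x)]
  simp only [← hYdef, h1, h2, hsymm, add_apply, zero_apply, add_zero]

theorem dirDeriv_const_clm_apply {c : E → F →L[ℝ] G} (hc : Differentiable ℝ c) (v : E) (w : F) :
    dirDeriv (fun _ => v) (fun p => c p w) = fun p => fderiv ℝ c p v w :=
  funext fun p => by
    rw [dirDeriv_clm_apply (hc p) (differentiableAt_const w)]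
    simp only [dirDeriv, fderiv_fun_const, Pi.zero_apply, zero_apply, map_zero, add_zero]

theorem dirDeriv_const_dirDeriv_const {g : E → F} (hg : ContDiff ℝ ∞ g) (v : E) :
    dirDeriv (fun _ => v) (dirDeriv (fun _ => v) g) = fun p => fderiv ℝ (fderiv ℝ g) p v v :=
  dirDeriv_const_clm_apply
    ((contDiff_infty_iff_fderiv.1 hg).2.differentiable (by simp)) v v

theorem dirDeriv_const_dirDeriv_const_dirDeriv_const {g : E → F} (hg : ContDiff ℝ ∞ g) (v : E) :
    dirDeriv (fun _ => v) (dirDeriv (fun _ => v) (dirDeriv (fun _ => v) g)) =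
      fun p => fderiv ℝ (fderiv ℝ (fderiv ℝ g)) p v v v := by
  obtain ⟨-, hDg⟩ := contDiff_infty_iff_fderiv.1 hg
  have hDDg : Differentiable ℝ (fderiv ℝ (fderiv ℝ g)) :=
    (contDiff_infty_iff_fderiv.1 hDg).2.differentiable (by simp)
  rw [dirDeriv_const_dirDeriv_const hg,
    dirDeriv_const_clm_apply (hDDg.clm_apply (differentiable_const v))]
  exact funext fun p => DFunLike.congr_fun (congrFun (dirDeriv_const_clm_apply hDDg v v) p) v

theorem contDiff_dirDeriv_const {g : E → F} (hg : ContDiff ℝ ∞ g) (v : E) :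
    ContDiff ℝ ∞ (dirDeriv (fun _ => v) g) :=
  (contDiff_infty_iff_fderiv.1 hg).2.clm_apply contDiff_const

theorem dirDeriv_const_mul {w g : E → ℝ} (hw : ContDiff ℝ ∞ w) (hg : ContDiff ℝ ∞ g) (v : E) :
    dirDeriv (fun _ => v) (fun p => w p * g p) =
      fun p => w p * dirDeriv (fun _ => v) g p + dirDeriv (fun _ => v) w p * g p :=
  funext fun p => dirDeriv_mul (hw.differentiable (by simp) p) (hg.differentiable (by simp) p)

theorem dirDeriv_const_dirDeriv_const_dirDeriv_const_mul {w g : E → ℝ} {x : E}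
    (hw : ContDiff ℝ ∞ w) (hg : ContDiff ℝ ∞ g) (v : E) (h0 : g x = 0)
    (h1 : dirDeriv (fun _ => v) g x = 0)
    (h2 : dirDeriv (fun _ => v) (dirDeriv (fun _ => v) g) x = 0) :
    dirDeriv (fun _ => v) (dirDeriv (fun _ => v) (dirDeriv (fun _ => v) fun p => w p * g p)) x =
      w x * dirDeriv (fun _ => v) (dirDeriv (fun _ => v) (dirDeriv (fun _ => v) g)) x := by
  have hg1 := contDiff_dirDeriv_const hg v
  have hg2 := contDiff_dirDeriv_const hg1 v
  have hw1 := contDiff_dirDeriv_const hw v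
  have hw2 := contDiff_dirDeriv_const hw1 v
  have hadd {a b : E → ℝ} (ha : ContDiff ℝ ∞ a) (hb : ContDiff ℝ ∞ b) :
      dirDeriv (fun _ => v) (fun p => a p + b p) =
        fun p => dirDeriv (fun _ => v) a p + dirDeriv (fun _ => v) b p :=
    funext fun p => dirDeriv_add (ha.differentiable (by simp) p) (hb.differentiable (by simp) p)
  rw [dirDeriv_const_mul hw hg, hadd (hw.mul hg1) (hw1.mul hg), dirDeriv_const_mul hw hg1,
    dirDeriv_const_mul hw1 hg,
    hadd ((hw.mul hg2).add (hw1.mul hg1)) ((hw1.mul hg1).add (hw2.mul hg)),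
    hadd (hw.mul hg2) (hw1.mul hg1), hadd (hw1.mul hg1) (hw2.mul hg), dirDeriv_const_mul hw hg2,
    dirDeriv_const_mul hw1 hg1, dirDeriv_const_mul hw2 hg]
  simp only [h0, h1, h2, mul_zero, add_zero]

end dirDeriv

section IsA2Along

variable {E F : Type*} [NormedAddCommGroup E] [NormedSpace ℝ E]
  [NormedAddCommGroup F] [NormedSpace ℝ F]

/-- `g` has a critical zero at the origin whose Hessian is nonzero and has `v` in its kernel, and
the cubic term of `g` does not vanish along `v`. In the plane this says that `g` has an `A₂`
singularity (it is equivalent to `± x² + y³`) whose Hessian has kernel direction `v`. -/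
def IsA2Along (g : E → ℝ) (v : E) : Prop :=
  g 0 = 0 ∧ fderiv ℝ g 0 = 0 ∧ fderiv ℝ (fderiv ℝ g) 0 v = 0 ∧ fderiv ℝ (fderiv ℝ g) 0 ≠ 0 ∧
    fderiv ℝ (fderiv ℝ (fderiv ℝ g)) 0 v v v ≠ 0

theorem isA2Along_congr {g h : E → ℝ} {v : E} (hg : ContDiff ℝ ∞ g) (hh : ContDiff ℝ ∞ h)
    (hgh : VanishesToOrder 4 (g - h)) : IsA2Along g v ↔ IsA2Along h v := by
  obtain ⟨-, hDg⟩ := contDiff_infty_iff_fderiv.1 hg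
  obtain ⟨-, hDh⟩ := contDiff_infty_iff_fderiv.1 hh
  have h1 := hgh.fderiv_sub hg hh
  have h2 := h1.fderiv_sub hDg hDh
  have h3 := h2.fderiv_sub (contDiff_infty_iff_fderiv.1 hDg).2 (contDiff_infty_iff_fderiv.1 hDh).2
  rw [IsA2Along, IsA2Along, sub_eq_zero.1 hgh.apply_zero, sub_eq_zero.1 h1.apply_zero,
    sub_eq_zero.1 h2.apply_zero, sub_eq_zero.1 h3.apply_zero]

theorem fderiv_fderiv_comp_of_fderiv_eq_zero {g : F → ℝ} {χ : E → F} {x : E}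
    (hg : ContDiff ℝ ∞ g) (hχ : ContDiff ℝ ∞ χ) (h1 : fderiv ℝ g (χ x) = 0) (u : E) :
    fderiv ℝ (fderiv ℝ (g ∘ χ)) x u =
      (fderiv ℝ (fderiv ℝ g) (χ x) (fderiv ℝ χ x u)).comp (fderiv ℝ χ x) := by
  obtain ⟨hgd, hDg⟩ := contDiff_infty_iff_fderiv.1 hg
  obtain ⟨hχd, hDχ⟩ := contDiff_infty_iff_fderiv.1 hχ
  replace hDg := hDg.differentiable (by simp)
  have hfirst : fderiv ℝ (g ∘ χ) = fun p => (fderiv ℝ g (χ p)).comp (fderiv ℝ χ p) :=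
    funext fun p => fderiv_comp p (hgd _) (hχd p)
  rw [hfirst, fderiv_clm_comp (c := fun p => fderiv ℝ g (χ p)) ((hDg _).comp x (hχd x))
    (hDχ.differentiable (by simp) x), h1]
  ext w
  simp [fderiv_fun_comp x (hDg _) (hχd x)]

theorem isA2Along_comp {g : F → ℝ} {χ : E → F} (hg : ContDiff ℝ ∞ g) (hχ : ContDiff ℝ ∞ χ)
    (hχ0 : χ 0 = 0) (hbij : Function.Bijective (fderiv ℝ χ 0)) (u : E) :
    IsA2Along (g ∘ χ) u ↔ IsA2Along g (fderiv ℝ χ 0 u) := by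
  have hgχ : ContDiff ℝ ∞ (g ∘ χ) := hg.comp hχ
  have hcancel (ℓ : F →L[ℝ] ℝ) : ℓ.comp (fderiv ℝ χ 0) = 0 ↔ ℓ = 0 := by
    simp only [ContinuousLinearMap.ext_iff, ContinuousLinearMap.comp_apply, zero_apply,
      hbij.surjective.forall (p := fun y => ℓ y = 0)]
  have hD : fderiv ℝ (g ∘ χ) 0 = (fderiv ℝ g 0).comp (fderiv ℝ χ 0) := by
    rw [fderiv_comp 0 (hg.differentiable (by simp) _) (hχ.differentiable (by simp) 0), hχ0]
  rw [IsA2Along, IsA2Along, hD, hcancel, Function.comp_apply, hχ0]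
  refine and_congr_right fun _ => and_congr_right fun h1 => ?_
  have hD2 (w : E) : fderiv ℝ (fderiv ℝ (g ∘ χ)) 0 w =
      (fderiv ℝ (fderiv ℝ g) 0 (fderiv ℝ χ 0 w)).comp (fderiv ℝ χ 0) := by
    rw [fderiv_fderiv_comp_of_fderiv_eq_zero hg hχ (hχ0.symm ▸ h1), hχ0]
  have hD2_iff : fderiv ℝ (fderiv ℝ (g ∘ χ)) 0 = 0 ↔ fderiv ℝ (fderiv ℝ g) 0 = 0 := by
    rw [ContinuousLinearMap.ext_iff, ContinuousLinearMap.ext_iff, hbij.surjective.forall]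
    simp only [hD2, zero_apply, hcancel]
  rw [hD2, hcancel, Ne, hD2_iff]
  refine and_congr_right fun h2 => and_congr_right fun _ => ?_
  have hD3 : fderiv ℝ (fderiv ℝ (fderiv ℝ (g ∘ χ))) 0 u u u =
      fderiv ℝ (fderiv ℝ (fderiv ℝ g)) 0 (fderiv ℝ χ 0 u) (fderiv ℝ χ 0 u) (fderiv ℝ χ 0 u) := by
    have h := dirDeriv_dirDeriv_dirDeriv_comp (X := fun _ => u) (x := 0) hg hχ contDiffAt_const
      (hχ0.symm ▸ h1) (hχ0.symm ▸ h2)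
    rw [hχ0] at h
    exact (congrFun (dirDeriv_const_dirDeriv_const_dirDeriv_const hgχ u) 0).symm.trans h
  rw [hD3]

theorem isA2Along_mul {w g : E → ℝ} {v : E} (hw : ContDiff ℝ ∞ w) (hg : ContDiff ℝ ∞ g)
    (hw0 : w 0 ≠ 0) : IsA2Along (fun p => w p * g p) v ↔ IsA2Along g v := by
  obtain ⟨hwd, hDw⟩ := contDiff_infty_iff_fderiv.1 hw
  obtain ⟨hgd, hDg⟩ := contDiff_infty_iff_fderiv.1 hg
  replace hDw := hDw.differentiable (by simp)
  replace hDg := hDg.differentiable (by simp)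
  have hD : fderiv ℝ (fun p => w p * g p) = fun p => w p • fderiv ℝ g p + g p • fderiv ℝ w p :=
    funext fun p => fderiv_fun_mul (hwd p) (hgd p)
  rw [IsA2Along, IsA2Along, mul_eq_zero_iff_left hw0]
  refine and_congr_right fun h0 => ?_
  have hD0 : fderiv ℝ (fun p => w p * g p) 0 = w 0 • fderiv ℝ g 0 := by simp [hD, h0]
  rw [hD0, smul_eq_zero_iff_right hw0]
  refine and_congr_right fun h1 => ?_
  have hD2 : fderiv ℝ (fderiv ℝ (fun p => w p * g p)) 0 = w 0 • fderiv ℝ (fderiv ℝ g) 0 := by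
    rw [hD, fderiv_fun_add ((hwd 0).fun_smul (hDg 0)) ((hgd 0).fun_smul (hDw 0)),
      fderiv_fun_smul (hwd 0) (hDg 0), fderiv_fun_smul (hgd 0) (hDw 0), h0, h1]
    ext; simp
  rw [hD2, smul_apply, smul_eq_zero_iff_right hw0, Ne, smul_eq_zero_iff_right hw0]
  refine and_congr_right fun h2 => and_congr_right fun _ => ?_
  have hD3 : fderiv ℝ (fderiv ℝ (fderiv ℝ fun p => w p * g p)) 0 v v v =
      w 0 * fderiv ℝ (fderiv ℝ (fderiv ℝ g)) 0 v v v := by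
    have hdir {h : E → ℝ} (hh : ContDiff ℝ ∞ h) :=
      congrFun (dirDeriv_const_dirDeriv_const_dirDeriv_const hh v) 0
    rw [← hdir (hw.mul hg), ← hdir hg]
    refine dirDeriv_const_dirDeriv_const_dirDeriv_const_mul hw hg v h0 ?_ ?_
    · simp [dirDeriv, h1]
    · simp [dirDeriv_const_dirDeriv_const hg, h2]
  rw [hD3, Ne, mul_eq_zero_iff_left hw0]

end IsA2Along

section IsDiffeoGerm

variable {E : Type*} [NormedAddCommGroup E] [NormedSpace ℝ E]

/-- `φ` represents a germ of a diffeomorphism `(E, 0) → (E, 0)`, encoded through the inverse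
function theorem by the bijectivity of its derivative at the origin. -/
structure IsDiffeoGerm (φ : E → E) : Prop where
  contDiff : ContDiff ℝ ∞ φ
  map_zero : φ 0 = 0
  bijective_fderiv : Function.Bijective (fderiv ℝ φ 0)

theorem IsDiffeoGerm.differentiable {φ : E → E} (hφ : IsDiffeoGerm φ) : Differentiable ℝ φ :=
  hφ.contDiff.differentiable (by simp)

theorem IsDiffeoGerm.comp {φ ψ : E → E} (hφ : IsDiffeoGerm φ) (hψ : IsDiffeoGerm ψ) :
    IsDiffeoGerm (φ ∘ ψ) := by
  refine ⟨hφ.contDiff.comp hψ.contDiff, by simp [hψ.map_zero, hφ.map_zero], ?_⟩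
  rw [fderiv_comp 0 (hφ.differentiable _) (hψ.differentiable 0), ContinuousLinearMap.coe_comp,
    hψ.map_zero]
  exact hφ.bijective_fderiv.comp hψ.bijective_fderiv

theorem isDiffeoGerm_of_continuousLinearEquiv (L : E ≃L[ℝ] E) : IsDiffeoGerm L :=
  ⟨L.contDiff, L.map_zero, by rw [L.fderiv]; exact L.bijective⟩

end IsDiffeoGerm

theorem jetEquiv_iff_exists_vanishesToOrder {r : ℕ} {f g : ℝ × ℝ → ℝ × ℝ} (hf : ContDiff ℝ ∞ f)
    (hg : ContDiff ℝ ∞ g) :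
    JetEquiv r f g ↔
      ∃ φ ψ, IsDiffeoGerm φ ∧ IsDiffeoGerm ψ ∧ VanishesToOrder (r + 1) (ψ ∘ f ∘ φ - g) := by
  constructor
  · rintro ⟨φ, ψ, hφ, hψ, hφ0, hψ0, hφb, hψb, h⟩
    exact ⟨φ, ψ, ⟨hφ, hφ0, hφb⟩, ⟨hψ, hψ0, hψb⟩,
      (vanishesToOrder_sub_iff (hψ.comp (hf.comp hφ)) hg).2 h⟩
  · rintro ⟨φ, ψ, hφ, hψ, h⟩
    exact ⟨φ, ψ, hφ.contDiff, hψ.contDiff, hφ.map_zero, hψ.map_zero, hφ.bijective_fderiv,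
      hψ.bijective_fderiv,
      (vanishesToOrder_sub_iff (hψ.contDiff.comp (hf.comp hφ.contDiff)) hg).1 h⟩

theorem jetEquiv_of_comp {r : ℕ} {f g χ S : ℝ × ℝ → ℝ × ℝ} (hχ : IsDiffeoGerm χ)
    (hS : IsDiffeoGerm S) (h : JetEquiv r (S ∘ f ∘ χ) g) : JetEquiv r f g := by
  obtain ⟨φ, ψ, hφ, hψ, hφ0, hψ0, hφb, hψb, h⟩ := h
  have hχφ := hχ.comp ⟨hφ, hφ0, hφb⟩
  have hψS := IsDiffeoGerm.comp ⟨hψ, hψ0, hψb⟩ hS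
  exact ⟨χ ∘ φ, ψ ∘ S, hχφ.contDiff, hψS.contDiff, hχφ.map_zero, hψS.map_zero,
    hχφ.bijective_fderiv, hψS.bijective_fderiv, h⟩

theorem JetEquiv.congr_left {r : ℕ} {f f' g : ℝ × ℝ → ℝ × ℝ} (hff' : f =ᶠ[𝓝 0] f')
    (h : JetEquiv r f g) : JetEquiv r f' g := by
  obtain ⟨φ, ψ, hφ, hψ, hφ0, hψ0, hφb, hψb, h⟩ := h
  have hcomp : ψ ∘ f ∘ φ =ᶠ[𝓝 0] ψ ∘ f' ∘ φ := by
    have hφ_tendsto : Tendsto φ (𝓝 0) (𝓝 0) := by simpa [hφ0] using hφ.continuous.tendsto 0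
    filter_upwards [hφ_tendsto.eventually hff'] with p hp
    simp [hp]
  exact ⟨φ, ψ, hφ, hψ, hφ0, hψ0, hφb, hψb, fun i hi =>
    (hcomp.iteratedFDeriv ℝ i).self_of_nhds.symm.trans (h i hi)⟩

section jacDet

theorem jacDet_eq_det (f : ℝ × ℝ → ℝ × ℝ) (p : ℝ × ℝ) :
    jacDet f p = LinearMap.det (fderiv ℝ f p : ℝ × ℝ →ₗ[ℝ] ℝ × ℝ) := by
  rw [← LinearMap.det_toMatrix (Module.Basis.finTwoProd ℝ), Matrix.det_fin_two]
  simp [LinearMap.toMatrix_apply, jacDet, mul_comm]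

theorem jacDet_comp {f g : ℝ × ℝ → ℝ × ℝ} {p : ℝ × ℝ} (hf : DifferentiableAt ℝ f (g p))
    (hg : DifferentiableAt ℝ g p) : jacDet (f ∘ g) p = jacDet f (g p) * jacDet g p := by
  simp only [jacDet_eq_det, fderiv_comp p hf hg, ContinuousLinearMap.toLinearMap_comp,
    LinearMap.det_comp]

theorem bijective_fderiv_iff_jacDet_ne_zero {f : ℝ × ℝ → ℝ × ℝ} {p : ℝ × ℝ} :
    Function.Bijective (fderiv ℝ f p) ↔ jacDet f p ≠ 0 := by
  rw [jacDet_eq_det, ← isUnit_iff_ne_zero, ← LinearMap.isUnit_iff_isUnit_det, Module.End.isUnit_iff,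
    ContinuousLinearMap.coe_coe]

theorem jacDet_eventuallyEq {f g : ℝ × ℝ → ℝ × ℝ} {p : ℝ × ℝ} (h : f =ᶠ[𝓝 p] g) :
    jacDet f =ᶠ[𝓝 p] jacDet g :=
  (h.fderiv (𝕜 := ℝ)).mono fun q hq => by simp only [jacDet, hq]

theorem contDiff_jacDet {f : ℝ × ℝ → ℝ × ℝ} (hf : ContDiff ℝ ∞ f) : ContDiff ℝ ∞ (jacDet f) := by
  have hx := contDiff_dirDeriv_const hf (1, 0)
  have hy := contDiff_dirDeriv_const hf (0, 1)
  exact (hx.fst.mul hy.snd).sub (hx.snd.mul hy.fst)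

theorem jacDet_graph {K : ℝ × ℝ → ℝ} {p : ℝ × ℝ} (hK : DifferentiableAt ℝ K p) :
    jacDet (fun q => (q.1, K q)) p = pdy K p := by
  have hd : fderiv ℝ (fun q : ℝ × ℝ => (q.1, K q)) p =
      (ContinuousLinearMap.fst ℝ ℝ ℝ).prod (fderiv ℝ K p) :=
    (hasFDerivAt_fst.prodMk hK.hasFDerivAt).fderiv
  simp [jacDet, hd, pdy, dop]

theorem vanishesToOrder_jacDet_sub {n : ℕ} {f g : ℝ × ℝ → ℝ × ℝ} (hf : ContDiff ℝ ∞ f)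
    (hg : ContDiff ℝ ∞ g) (hfg : VanishesToOrder (n + 1) (f - g)) :
    VanishesToOrder n (jacDet f - jacDet g) := by
  have hD := hfg.fderiv_sub hf hg
  have hfy := contDiff_dirDeriv_const hf (0, 1)
  have hgx := contDiff_dirDeriv_const hg (1, 0)
  have hterm (ℓ : ℝ × ℝ →L[ℝ] ℝ) (v : ℝ × ℝ) {a : ℝ × ℝ → ℝ} (ha : ContDiff ℝ ∞ a) :
      VanishesToOrder n (fun p => ℓ ((fderiv ℝ f p - fderiv ℝ g p) v) * a p) :=
    (hD.clm_comp (ℓ.comp (ContinuousLinearMap.apply ℝ (ℝ × ℝ) v))).mul (.of_contDiff ha)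
  let X := ContinuousLinearMap.fst ℝ ℝ ℝ
  let Y := ContinuousLinearMap.snd ℝ ℝ ℝ
  have htelescope : jacDet f - jacDet g =
      (fun p => X ((fderiv ℝ f p - fderiv ℝ g p) (1, 0)) * Y (fderiv ℝ f p (0, 1))) +
      (fun p => Y ((fderiv ℝ f p - fderiv ℝ g p) (0, 1)) * X (fderiv ℝ g p (1, 0))) +
      (fun p => Y ((fderiv ℝ f p - fderiv ℝ g p) (1, 0)) * -X (fderiv ℝ f p (0, 1))) +
      (fun p => X ((fderiv ℝ f p - fderiv ℝ g p) (0, 1)) * -Y (fderiv ℝ g p (1, 0))) := by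
    ext p
    simp only [jacDet, X, Y, Pi.sub_apply, Pi.add_apply, sub_apply,
      ContinuousLinearMap.coe_fst', ContinuousLinearMap.coe_snd', Prod.fst_sub, Prod.snd_sub]
    ring
  rw [htelescope]
  exact (((hterm X (1, 0) hfy.snd).add (hterm Y (0, 1) hgx.fst)).add
    (hterm Y (1, 0) hfy.fst.neg)).add (hterm X (0, 1) hgx.snd.neg)

theorem isA2Along_jacDet_comp {f φ ψ : ℝ × ℝ → ℝ × ℝ} (hf : ContDiff ℝ ∞ f) (hf0 : f 0 = 0)
    (hφ : IsDiffeoGerm φ) (hψ : IsDiffeoGerm ψ) (u : ℝ × ℝ) :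
    IsA2Along (jacDet (ψ ∘ f ∘ φ)) u ↔ IsA2Along (jacDet f) (fderiv ℝ φ 0 u) := by
  have hfφ : ContDiff ℝ ∞ (f ∘ φ) := hf.comp hφ.contDiff
  have hjac : jacDet (ψ ∘ f ∘ φ) =
      fun p => (jacDet ψ (f (φ p)) * jacDet φ p) * (jacDet f ∘ φ) p := funext fun p => by
    rw [jacDet_comp (hψ.differentiable _) (hfφ.differentiable (by simp) p),
      jacDet_comp (hf.differentiable (by simp) _) (hφ.differentiable p)]
    simp only [Function.comp_apply]
    ring
  have hunit : jacDet ψ (f (φ 0)) * jacDet φ 0 ≠ 0 := by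
    rw [hφ.map_zero, hf0]
    exact mul_ne_zero (bijective_fderiv_iff_jacDet_ne_zero.1 hψ.bijective_fderiv)
      (bijective_fderiv_iff_jacDet_ne_zero.1 hφ.bijective_fderiv)
  have hw : ContDiff ℝ ∞ fun p => jacDet ψ (f (φ p)) * jacDet φ p :=
    ((contDiff_jacDet hψ.contDiff).comp hfφ).mul (contDiff_jacDet hφ.contDiff)
  rw [hjac, isA2Along_mul hw ((contDiff_jacDet hf).comp hφ.contDiff) hunit,
    isA2Along_comp (contDiff_jacDet hf) hφ.contDiff hφ.map_zero hφ.bijective_fderiv]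

end jacDet

section tcoeff

variable {g h : ℝ × ℝ → ℝ}

theorem contDiff_dop (hg : ContDiff ℝ ∞ g) (v : ℝ × ℝ) : ContDiff ℝ ∞ (dop v g) :=
  contDiff_dirDeriv_const hg v

theorem contDiff_dop_iterate (hg : ContDiff ℝ ∞ g) (v : ℝ × ℝ) (n : ℕ) :
    ContDiff ℝ ∞ ((dop v)^[n] g) :=
  Function.Iterate.rec (ContDiff ℝ ∞) hg (fun _ hk => contDiff_dop hk v) n

theorem contDiff_pdx (hg : ContDiff ℝ ∞ g) : ContDiff ℝ ∞ (pdx g) := contDiff_dop hg _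

theorem contDiff_pdy (hg : ContDiff ℝ ∞ g) : ContDiff ℝ ∞ (pdy g) := contDiff_dop hg _

theorem fderiv_apply_eq_pdx_pdy (g : ℝ × ℝ → ℝ) (p v : ℝ × ℝ) :
    fderiv ℝ g p v = v.1 * pdx g p + v.2 * pdy g p := by
  have hv : v = v.1 • ((1, 0) : ℝ × ℝ) + v.2 • ((0, 1) : ℝ × ℝ) := by ext <;> simp
  conv_lhs => rw [hv, map_add, map_smul, map_smul]
  rfl

theorem fderiv_fderiv_apply_eq_dop_dop (hg : ContDiff ℝ ∞ g) (u v p : ℝ × ℝ) :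
    fderiv ℝ (fderiv ℝ g) p u v = dop u (dop v g) p :=
  (congrFun (dirDeriv_const_clm_apply (c := fderiv ℝ g)
    ((contDiff_infty_iff_fderiv.1 hg).2.differentiable (by simp)) u v) p).symm

theorem dop_comm (hg : ContDiff ℝ ∞ g) (u v : ℝ × ℝ) : dop u (dop v g) = dop v (dop u g) := by
  ext p
  rw [← fderiv_fderiv_apply_eq_dop_dop hg, ← fderiv_fderiv_apply_eq_dop_dop hg,
    hg.contDiffAt.isSymmSndFDerivAt (by simpa using ENat.LEInfty.out)]

theorem pdy_iterate_pdx (hg : ContDiff ℝ ∞ g) (j : ℕ) : pdy^[j] (pdx g) = pdx (pdy^[j] g) := by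
  induction j generalizing g with
  | zero => rfl
  | succ j ih =>
    rw [Function.iterate_succ_apply, Function.iterate_succ_apply, ← ih (contDiff_pdy hg), pdx, pdy,
      dop_comm hg]

theorem tcoeff_zero_zero (g : ℝ × ℝ → ℝ) : tcoeff g 0 0 = g 0 := by
  simp [tcoeff]

theorem tcoeff_pdx (hg : ContDiff ℝ ∞ g) (i j : ℕ) :
    tcoeff (pdx g) i j = (i + 1) * tcoeff g (i + 1) j := by
  rw [tcoeff, tcoeff, pdy_iterate_pdx hg, ← Function.iterate_succ_apply, Nat.factorial_succ]
  push_cast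
  field_simp

theorem tcoeff_pdy (g : ℝ × ℝ → ℝ) (i j : ℕ) :
    tcoeff (pdy g) i j = (j + 1) * tcoeff g i (j + 1) := by
  rw [tcoeff, tcoeff, ← Function.iterate_succ_apply, Nat.factorial_succ]
  push_cast
  field_simp

theorem vanishesToOrder_sub_of_tcoeff_eq {n : ℕ} (hg : ContDiff ℝ ∞ g) (hh : ContDiff ℝ ∞ h)
    (hgh : ∀ i j, i + j < n → tcoeff g i j = tcoeff h i j) : VanishesToOrder n (g - h) := by
  induction n generalizing g h with
  | zero => exact .of_contDiff (hg.sub hh)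
  | succ n ih =>
    have hx : VanishesToOrder n (pdx g - pdx h) :=
      ih (contDiff_pdx hg) (contDiff_pdx hh) fun i j hij => by
        rw [tcoeff_pdx hg, tcoeff_pdx hh, hgh (i + 1) j (by omega)]
    have hy : VanishesToOrder n (pdy g - pdy h) :=
      ih (contDiff_pdy hg) (contDiff_pdy hh) fun i j hij => by
        rw [tcoeff_pdy, tcoeff_pdy, hgh i (j + 1) (by omega)]
    have h0 : (g - h) 0 = 0 := by
      simpa [tcoeff_zero_zero, sub_eq_zero] using hgh 0 0 n.succ_pos
    have hD : fderiv ℝ (g - h) =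
        (ContinuousLinearMap.toSpanSingleton ℝ (ContinuousLinearMap.fst ℝ ℝ ℝ)) ∘
          (pdx g - pdx h) +
        (ContinuousLinearMap.toSpanSingleton ℝ (ContinuousLinearMap.snd ℝ ℝ ℝ)) ∘
          (pdy g - pdy h) := by
      ext p : 1
      refine ContinuousLinearMap.ext fun v => ?_
      rw [fderiv_sub (hg.differentiable (by simp) p) (hh.differentiable (by simp) p), sub_apply,
        fderiv_apply_eq_pdx_pdy, fderiv_apply_eq_pdx_pdy]
      simp only [map_comp_sub, Pi.add_apply, Pi.sub_apply, Function.comp_apply,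
        ContinuousLinearMap.toSpanSingleton_apply, add_apply, sub_apply, smul_apply,
        ContinuousLinearMap.coe_fst', ContinuousLinearMap.coe_snd', smul_eq_mul]
      ring
    exact (vanishesToOrder_succ_iff (h := g - h) (hg.sub hh)).2
      ⟨h0, hD ▸ (hx.clm_comp _).add (hy.clm_comp _)⟩

theorem dop_iterate_add (hg : ContDiff ℝ ∞ g) (hh : ContDiff ℝ ∞ h) (v : ℝ × ℝ) (n : ℕ) :
    (dop v)^[n] (g + h) = (dop v)^[n] g + (dop v)^[n] h := by
  induction n generalizing g h with
  | zero => rfl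
  | succ n ih =>
    have hadd : dop v (g + h) = dop v g + dop v h := funext fun p =>
      dirDeriv_add (X := fun _ => v) (hg.differentiable (by simp) p)
        (hh.differentiable (by simp) p)
    rw [Function.iterate_succ_apply, hadd, ih (contDiff_dop hg v) (contDiff_dop hh v)]
    rfl

theorem tcoeff_add (hg : ContDiff ℝ ∞ g) (hh : ContDiff ℝ ∞ h) (i j : ℕ) :
    tcoeff (g + h) i j = tcoeff g i j + tcoeff h i j := by
  have hx := dop_iterate_add (contDiff_dop_iterate hg (0, 1) j) (contDiff_dop_iterate hh (0, 1) j)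
    (1, 0) i
  rw [tcoeff, tcoeff, tcoeff, pdx, pdy, dop_iterate_add hg hh, hx, Pi.add_apply, add_div]

theorem dop_separated {a b : ℝ → ℝ} (ha : Differentiable ℝ a) (hb : Differentiable ℝ b)
    (v : ℝ × ℝ) :
    dop v (fun p => a p.1 * b p.2) =
      fun p => v.1 * (deriv a p.1 * b p.2) + v.2 * (a p.1 * deriv b p.2) := by
  ext p
  have h := ((ha p.1).hasDerivAt.comp_hasFDerivAt p hasFDerivAt_fst).mul
    ((hb p.2).hasDerivAt.comp_hasFDerivAt p
      (hasFDerivAt_snd : HasFDerivAt Prod.snd (ContinuousLinearMap.snd ℝ ℝ ℝ) p))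
  rw [dop]
  refine (DFunLike.congr_fun h.fderiv v).trans ?_
  simp only [Function.comp_apply, add_apply, smul_apply, ContinuousLinearMap.coe_fst',
    ContinuousLinearMap.coe_snd', smul_eq_mul]
  ring

theorem tcoeff_separated {a b : ℝ → ℝ} (ha : ContDiff ℝ ∞ a) (hb : ContDiff ℝ ∞ b) (i j : ℕ) :
    tcoeff (fun p => a p.1 * b p.2) i j =
      iteratedDeriv i a 0 / i.factorial * (iteratedDeriv j b 0 / j.factorial) := by
  have hdiff {c : ℝ → ℝ} (hc : ContDiff ℝ ∞ c) (k : ℕ) : Differentiable ℝ (iteratedDeriv k c) :=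
    hc.differentiable_iteratedDeriv k (mod_cast WithTop.coe_lt_top _)
  have hy : pdy^[j] (fun p => a p.1 * b p.2) = fun p => a p.1 * iteratedDeriv j b p.2 := by
    induction j with
    | zero => simp
    | succ j ih =>
      rw [Function.iterate_succ_apply', ih, pdy, dop_separated (ha.differentiable (by simp))
        (hdiff hb j), iteratedDeriv_succ]
      simp
  have hx : pdx^[i] (fun p => a p.1 * iteratedDeriv j b p.2) =
      fun p => iteratedDeriv i a p.1 * iteratedDeriv j b p.2 := by
    induction i with
    | zero => simp
    | succ i ih =>
      rw [Function.iterate_succ_apply', ih, pdx, dop_separated (hdiff ha i) (hdiff hb j),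
        iteratedDeriv_succ]
      simp
  rw [tcoeff, hy, hx, mul_div_mul_comm]
  rfl

theorem tcoeff_monomial (c : ℝ) (k l i j : ℕ) :
    tcoeff (fun p => c * p.1 ^ k * p.2 ^ l) i j = if i = k ∧ j = l then c else 0 := by
  rw [tcoeff_separated (a := fun x => c * x ^ k) (b := fun y => y ^ l) (by fun_prop) (by fun_prop),
    iteratedDeriv_const_mul_field, iteratedDeriv_fun_pow_zero, iteratedDeriv_fun_pow_zero]
  by_cases hi : i = k <;> by_cases hj : j = l <;>
    simp [hi, hj, Nat.factorial_ne_zero]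

theorem tcoeff_sum {ι : Type*} (s : Finset ι) {φ : ι → ℝ × ℝ → ℝ}
    (hφ : ∀ k, ContDiff ℝ ∞ (φ k)) (i j : ℕ) :
    tcoeff (fun p => ∑ k ∈ s, φ k p) i j = ∑ k ∈ s, tcoeff (φ k) i j := by
  classical
  induction s using Finset.induction_on with
  | empty => simpa using tcoeff_monomial 0 0 0 i j
  | insert k s hk ih =>
    simp only [Finset.sum_insert hk, ← ih]
    exact tcoeff_add (hφ k) (.sum fun k _ => hφ k) i j

/-- The Taylor polynomial at the origin of `g`, consisting of its terms of degree `< n`. -/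
def taylorPoly (g : ℝ × ℝ → ℝ) (n : ℕ) (p : ℝ × ℝ) : ℝ :=
  ∑ d ∈ Finset.range n, ∑ k ∈ Finset.HasAntidiagonal.antidiagonal d,
    tcoeff g k.1 k.2 * p.1 ^ k.1 * p.2 ^ k.2

theorem vanishesToOrder_sub_taylorPoly (hg : ContDiff ℝ ∞ g) (n : ℕ) :
    VanishesToOrder n (g - taylorPoly g n) := by
  have hmono (k : ℕ × ℕ) : ContDiff ℝ ∞ fun p : ℝ × ℝ =>
      tcoeff g k.1 k.2 * p.1 ^ k.1 * p.2 ^ k.2 := by fun_prop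
  have hhom (d : ℕ) : ContDiff ℝ ∞ fun p : ℝ × ℝ =>
      ∑ k ∈ Finset.HasAntidiagonal.antidiagonal d, tcoeff g k.1 k.2 * p.1 ^ k.1 * p.2 ^ k.2 :=
    .sum fun k _ => hmono k
  refine vanishesToOrder_sub_of_tcoeff_eq hg (.sum fun d _ => hhom d) fun i j hij => ?_
  rw [funext fun p => taylorPoly.eq_1 g n p, tcoeff_sum _ hhom]
  simp_rw [tcoeff_sum _ hmono, tcoeff_monomial]
  rw [Finset.sum_eq_single_of_mem (i + j) (Finset.mem_range.2 hij),
    Finset.sum_eq_single_of_mem (i, j) (Finset.HasAntidiagonal.mem_antidiagonal.2 rfl)]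
  · simp
  · rintro ⟨k, l⟩ - hkl
    rw [if_neg (by rintro ⟨rfl, rfl⟩; exact hkl rfl)]
  · refine fun d _ hd => Finset.sum_eq_zero fun k hk => if_neg ?_
    rintro ⟨rfl, rfl⟩
    exact hd (Finset.HasAntidiagonal.mem_antidiagonal.1 hk).symm

end tcoeff

section plane

theorem rank_eq_one_iff_of_fin_two {K : Type*} [Field K] (M : Matrix (Fin 2) (Fin 2) K) :
    M.rank = 1 ↔ M ≠ 0 ∧ M.det = 0 := by
  have hle : M.rank ≤ 2 := by simpa using M.rank_le_width
  have hzero : M.rank = 0 ↔ M = 0 := by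
    rw [Matrix.rank, Submodule.finrank_eq_zero, LinearMap.range_eq_bot, ← Matrix.toLin'_apply',
      LinearEquiv.map_eq_zero_iff]
  have htwo : M.rank = 2 ↔ ¬ M.det = 0 := by
    rw [← Ne, ← isUnit_iff_ne_zero, ← Matrix.isUnit_iff_isUnit_det,
      ← Matrix.linearIndependent_rows_iff_isUnit, linearIndependent_iff_card_eq_finrank_span,
      Set.finrank, ← M.rank_eq_finrank_span_row, Fintype.card_fin, eq_comm]
  rw [Ne, ← hzero, ← not_not (a := M.det = 0), ← htwo]
  omega

variable {g : ℝ × ℝ → ℝ}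

theorem fderiv_eq_zero_iff_pdx_pdy {p : ℝ × ℝ} :
    fderiv ℝ g p = 0 ↔ pdx g p = 0 ∧ pdy g p = 0 := by
  refine ⟨fun h => by simp [pdx, pdy, dop, h], fun h => ContinuousLinearMap.ext fun v => ?_⟩
  rw [fderiv_apply_eq_pdx_pdy, h.1, h.2]
  simp

theorem fderiv_fderiv_apply_eq_pdx_pdy (hg : ContDiff ℝ ∞ g) (p u v : ℝ × ℝ) :
    fderiv ℝ (fderiv ℝ g) p u v = u.1 * v.1 * pdx (pdx g) p +
      (u.1 * v.2 + u.2 * v.1) * pdx (pdy g) p + u.2 * v.2 * pdy (pdy g) p := by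
  have hv : dop v g = fun p => v.1 * pdx g p + v.2 * pdy g p :=
    funext fun p => fderiv_apply_eq_pdx_pdy g p v
  have hx := (contDiff_pdx hg).differentiable (by simp) p
  have hy := (contDiff_pdy hg).differentiable (by simp) p
  rw [fderiv_fderiv_apply_eq_dop_dop hg, hv, dop,
    fderiv_fun_add (hx.const_mul _) (hy.const_mul _), fderiv_const_mul hx, fderiv_const_mul hy,
    add_apply, smul_apply, smul_apply, fderiv_apply_eq_pdx_pdy (pdx g),
    fderiv_apply_eq_pdx_pdy (pdy g), show pdy (pdx g) = pdx (pdy g) from pdy_iterate_pdx hg 1]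
  simp only [smul_eq_mul]
  ring

theorem fderiv_fderiv_apply_eq_zero_iff (hg : ContDiff ℝ ∞ g) (p u : ℝ × ℝ) :
    fderiv ℝ (fderiv ℝ g) p u = 0 ↔ u.1 * pdx (pdx g) p + u.2 * pdx (pdy g) p = 0 ∧
      u.1 * pdx (pdy g) p + u.2 * pdy (pdy g) p = 0 := by
  refine ⟨fun h => ?_, fun h => ContinuousLinearMap.ext fun v => ?_⟩
  · have hx := fderiv_fderiv_apply_eq_pdx_pdy hg p u (1, 0)
    have hy := fderiv_fderiv_apply_eq_pdx_pdy hg p u (0, 1)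
    rw [h] at hx hy
    simp only [zero_apply] at hx hy
    exact ⟨by linear_combination -hx, by linear_combination -hy⟩
  · rw [fderiv_fderiv_apply_eq_pdx_pdy hg, zero_apply]
    linear_combination v.1 * h.1 + v.2 * h.2

theorem fderiv_fderiv_eq_zero_iff (hg : ContDiff ℝ ∞ g) (p : ℝ × ℝ) :
    fderiv ℝ (fderiv ℝ g) p = 0 ↔
      pdx (pdx g) p = 0 ∧ pdx (pdy g) p = 0 ∧ pdy (pdy g) p = 0 := by
  refine ⟨fun h => ?_, fun ⟨hxx, hxy, hyy⟩ => ?_⟩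
  · have hx := (fderiv_fderiv_apply_eq_zero_iff hg p (1, 0)).1 (by rw [h, zero_apply])
    have hy := (fderiv_fderiv_apply_eq_zero_iff hg p (0, 1)).1 (by rw [h, zero_apply])
    simp only [one_mul, zero_mul, add_zero, zero_add] at hx hy
    exact ⟨hx.1, hy⟩
  · refine ContinuousLinearMap.ext fun u => ?_
    exact (fderiv_fderiv_apply_eq_zero_iff hg p u).2 (by simp [hxx, hxy, hyy])

theorem rank_hess_eq_one_and_iff (hg : ContDiff ℝ ∞ g) {v : ℝ × ℝ} (hv : v ≠ 0) :
    (hess g).rank = 1 ∧ fderiv ℝ (fderiv ℝ g) 0 v v = 0 ↔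
      fderiv ℝ (fderiv ℝ g) 0 v = 0 ∧ fderiv ℝ (fderiv ℝ g) 0 ≠ 0 := by
  have hsymm : pdy (pdx g) = pdx (pdy g) := pdy_iterate_pdx hg 1
  have hzero : hess g = 0 ↔ fderiv ℝ (fderiv ℝ g) 0 = 0 := by
    rw [fderiv_fderiv_eq_zero_iff hg, hess, hsymm, ← Matrix.ext_iff]
    simp only [Fin.forall_fin_two, Matrix.of_apply, Matrix.cons_val', Matrix.cons_val_fin_one,
      Matrix.cons_val_zero, Matrix.cons_val_one, Matrix.zero_apply]
    tauto
  rw [rank_eq_one_iff_of_fin_two, and_assoc, and_comm (a := hess g ≠ 0), Ne, hzero]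
  refine and_congr_left fun _ => ?_
  rw [fderiv_fderiv_apply_eq_zero_iff hg, fderiv_fderiv_apply_eq_pdx_pdy hg, hess, hsymm,
    Matrix.det_fin_two_of]
  generalize pdx (pdx g) 0 = a, pdx (pdy g) 0 = b, pdy (pdy g) 0 = c
  constructor
  · rintro ⟨hdet, hq⟩
    exact ⟨pow_eq_zero_iff two_ne_zero |>.1 (by linear_combination a * hq - v.2 ^ 2 * hdet),
      pow_eq_zero_iff two_ne_zero |>.1 (by linear_combination c * hq - v.1 ^ 2 * hdet)⟩
  · rintro ⟨hx, hy⟩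
    refine ⟨by_contra fun hdet => hv ?_, by linear_combination v.1 * hx + v.2 * hy⟩
    have hv1 : (a * c - b * b) * v.1 = 0 := by linear_combination c * hx - b * hy
    have hv2 : (a * c - b * b) * v.2 = 0 := by linear_combination a * hy - b * hx
    exact Prod.ext ((mul_eq_zero.1 hv1).resolve_left hdet) ((mul_eq_zero.1 hv2).resolve_left hdet)

theorem isA2Along_iff_etaIter (hg : ContDiff ℝ ∞ g) (h0 : g 0 = 0) {X : ℝ × ℝ → ℝ × ℝ}
    (hX : ContDiffAt ℝ 2 X 0) (hX0 : X 0 ≠ 0) :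
    IsA2Along g (X 0) ↔ fderiv ℝ g 0 = 0 ∧ (hess g).rank = 1 ∧
      etaIter X 2 g 0 = 0 ∧ etaIter X 3 g 0 ≠ 0 := by
  rw [IsA2Along, and_iff_right h0]
  refine and_congr_right fun h1 => ?_
  have hid : dirDeriv X id 0 = X 0 := by simp [dirDeriv]
  have hsecond : etaIter X 2 g 0 = fderiv ℝ (fderiv ℝ g) 0 (X 0) (X 0) := by
    refine (dirDeriv_dirDeriv_comp hg contDiff_id (hX.of_le one_le_two)).trans ?_
    rw [id, h1, hid, zero_apply, add_zero]
  rw [hsecond, ← and_assoc, ← and_assoc, rank_hess_eq_one_and_iff hg hX0]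
  refine and_congr_right fun h2 => ?_
  have hthird : etaIter X 3 g 0 = fderiv ℝ (fderiv ℝ (fderiv ℝ g)) 0 (X 0) (X 0) (X 0) := by
    refine (dirDeriv_dirDeriv_dirDeriv_comp hg contDiff_id hX h1 ?_).trans ?_
    · rw [hid]; exact h2.1
    · rw [hid, id]
  rw [hthird]

theorem isA2Along_zero_prod_iff_tcoeff (hg : ContDiff ℝ ∞ g) {s : ℝ} (hs : s ≠ 0) :
    IsA2Along g (0, s) ↔ tcoeff g 0 0 = 0 ∧ tcoeff g 1 0 = 0 ∧ tcoeff g 0 1 = 0 ∧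
      tcoeff g 1 1 = 0 ∧ tcoeff g 0 2 = 0 ∧ tcoeff g 2 0 ≠ 0 ∧ tcoeff g 0 3 ≠ 0 := by
  have hcube : fderiv ℝ (fderiv ℝ (fderiv ℝ g)) 0 (0, s) (0, s) (0, s) =
      s ^ 3 * pdy (pdy (pdy g)) 0 := by
    have hs1 : ((0, s) : ℝ × ℝ) = s • (0, 1) := by simp
    have h := congrFun (dirDeriv_const_dirDeriv_const_dirDeriv_const hg (0, 1)) 0
    simp only [hs1, map_smul, smul_apply, smul_eq_mul, ← h]
    change s * (s * (s * pdy (pdy (pdy g)) 0)) = _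
    ring
  have hxx : tcoeff g 2 0 = 0 ↔ pdx (pdx g) 0 = 0 := by simp [tcoeff]
  have hyy : tcoeff g 0 2 = 0 ↔ pdy (pdy g) 0 = 0 := by simp [tcoeff]
  have hyyy : tcoeff g 0 3 = 0 ↔ pdy (pdy (pdy g)) 0 = 0 := by
    simp [tcoeff, Nat.factorial_ne_zero]
  have hxy : tcoeff g 1 1 = pdx (pdy g) 0 := by simp [tcoeff]
  have hx : tcoeff g 1 0 = pdx g 0 := by simp [tcoeff]
  have hy : tcoeff g 0 1 = pdy g 0 := by simp [tcoeff]
  rw [IsA2Along, fderiv_eq_zero_iff_pdx_pdy, fderiv_fderiv_apply_eq_zero_iff hg, Ne,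
    fderiv_fderiv_eq_zero_iff hg, hcube, Ne, Ne, Ne, hxx, hyy, hyyy, hxy, hx, hy, tcoeff_zero_zero]
  simp only [zero_mul, zero_add, mul_eq_zero, hs, false_or, pow_eq_zero_iff three_ne_zero]
  tauto

theorem isA2Along_pdy_iff_tcoeff (hg : ContDiff ℝ ∞ g) {s : ℝ} (hs : s ≠ 0) :
    IsA2Along (pdy g) (0, s) ↔ tcoeff g 0 1 = 0 ∧ tcoeff g 1 1 = 0 ∧ tcoeff g 0 2 = 0 ∧
      tcoeff g 1 2 = 0 ∧ tcoeff g 0 3 = 0 ∧ tcoeff g 2 1 ≠ 0 ∧ tcoeff g 0 4 ≠ 0 := by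
  rw [isA2Along_zero_prod_iff_tcoeff (contDiff_pdy hg) hs]
  norm_num [tcoeff_pdy]

end plane

section normalForm

theorem pdy_eq_deriv {K : ℝ × ℝ → ℝ} {p : ℝ × ℝ} (hK : DifferentiableAt ℝ K p) :
    pdy K p = deriv (fun y => K (p.1, y)) p.2 :=
  (hK.hasFDerivAt.comp_hasDerivAt p.2
    ((hasDerivAt_const p.2 p.1).prodMk (hasDerivAt_id p.2))).deriv.symm

theorem isDiffeoGerm_graph {K : ℝ × ℝ → ℝ} (hK : ContDiff ℝ ∞ K) (hK0 : K 0 = 0)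
    (hKy : pdy K 0 ≠ 0) : IsDiffeoGerm fun p : ℝ × ℝ => (p.1, K p) := by
  refine ⟨contDiff_fst.prodMk hK, by simp [hK0], bijective_fderiv_iff_jacDet_ne_zero.2 ?_⟩
  rwa [jacDet_graph (hK.differentiable (by simp) 0)]

/-- The terms of degree at most four, other than pure powers of `x`, of a function germ whose
partial derivative in `y` has an `A₂` singularity with Hessian kernel direction `∂/∂y`. -/
def fiberQuartic (a b c d e x y : ℝ) : ℝ :=
  a * x ^ 2 * y + b * x ^ 3 * y + c * x ^ 2 * y ^ 2 + d * x * y ^ 3 + e * y ^ 4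

theorem vanishesToOrder_fiberQuartic_sub (a b c d e : ℝ) {ℓ m : ℝ × ℝ → ℝ}
    (hℓ : VanishesToOrder 1 ℓ) (hm : VanishesToOrder 1 m) (hmℓ : VanishesToOrder 2 (m - ℓ)) :
    VanishesToOrder 5 fun p => fiberQuartic a b c d e p.1 (m p) -
      (fiberQuartic a b c d e p.1 (ℓ p) + a * p.1 ^ 2 * (m p - ℓ p)) := by
  have hx : VanishesToOrder 1 fun p : ℝ × ℝ => p.1 := .of_apply_zero contDiff_fst rfl
  have hconst (k : ℝ) : VanishesToOrder 0 fun _ : ℝ × ℝ => k := .of_contDiff contDiff_const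
  have hfactor := (((((hx.mul hx).mul hx).mul (hconst b)).add
    (((hx.mul hx).mul (hm.add hℓ)).mul (hconst c))).add
    ((hx.mul (((hm.mul hm).add (hm.mul hℓ)).add (hℓ.mul hℓ))).mul (hconst d))).add
    (((hm.add hℓ).mul ((hm.mul hm).add (hℓ.mul hℓ))).mul (hconst e))
  convert hmℓ.mul hfactor using 2 with p
  simp only [fiberQuartic, Pi.sub_apply, Pi.add_apply, Pi.mul_apply]
  ring

theorem pow_surjective_of_odd {n : ℕ} (hn : Odd n) : Function.Surjective fun t : ℝ => t ^ n := by
  have hroot {a : ℝ} (ha : 0 ≤ a) : (a ^ (n : ℝ)⁻¹) ^ n = a :=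
    Real.rpow_inv_natCast_pow ha hn.pos.ne'
  intro a
  rcases le_total 0 a with ha | ha
  · exact ⟨_, hroot ha⟩
  · exact ⟨-(-a) ^ (n : ℝ)⁻¹, by simp only [hn.neg_pow, hroot (neg_nonneg.2 ha), neg_neg]⟩

theorem exists_fiberQuartic_normalization (b c d : ℝ) {a e : ℝ} (ha : a ≠ 0) (he : e ≠ 0) :
    ∃ s t β γ u : ℝ, t ≠ 0 ∧ u ≠ 0 ∧ ∀ x y,
      u * (fiberQuartic a b c d e x (s * x + t * y) + a * x ^ 2 * (β * (x * y) + γ * (y * y)) -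
        fiberQuartic a b c d e x (s * x)) = x ^ 2 * y + y ^ 4 := by
  -- `t` makes the coefficients of `x²y` and `y⁴` equal, `s` kills `xy³`, then `β` kills `x³y` and
  -- `γ` kills `x²y²`.
  obtain ⟨t, ht⟩ : ∃ t : ℝ, t ^ 3 = a / e := pow_surjective_of_odd (by decide) (a / e)
  have ht0 : t ≠ 0 := by
    rintro rfl
    exact div_ne_zero ha he (by simpa using ht.symm)
  have hat : a = e * t ^ 3 := by rw [ht]; field_simp
  obtain ⟨s, rfl⟩ : ∃ s, d = -(4 * e * s) := ⟨-d / (4 * e), by field_simp⟩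
  refine ⟨s, t, -(t * (b + 2 * c * s - 8 * e * s ^ 3)) / a, -(t ^ 2 * (c - 6 * e * s ^ 2)) / a,
    1 / (a * t), ht0, by positivity, fun x y => ?_⟩
  simp only [fiberQuartic]
  field_simp
  rw [hat]
  ring

theorem vanishesToOrder_sub_fiberQuartic {G : ℝ × ℝ → ℝ} (hG : ContDiff ℝ ∞ G) (hG0 : G 0 = 0)
    {s : ℝ} (hs : s ≠ 0) (hA2 : IsA2Along (pdy G) (0, s)) :
    VanishesToOrder 5 fun p => G p - ((tcoeff G 1 0 * p.1 + tcoeff G 2 0 * p.1 ^ 2 +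
      tcoeff G 3 0 * p.1 ^ 3 + tcoeff G 4 0 * p.1 ^ 4) + fiberQuartic (tcoeff G 2 1) (tcoeff G 3 1)
        (tcoeff G 2 2) (tcoeff G 1 3) (tcoeff G 0 4) p.1 p.2) := by
  obtain ⟨h01, h11, h02, h12, h03, -, -⟩ := (isA2Along_pdy_iff_tcoeff hG hs).1 hA2
  convert vanishesToOrder_sub_taylorPoly hG 5 using 2 with p
  simp only [taylorPoly, fiberQuartic, Finset.Nat.sum_antidiagonal_eq_sum_range_succ_mk,
    Finset.sum_range_succ, Finset.sum_range_zero, tcoeff_zero_zero, hG0, h01, h11, h02, h12, h03,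
    Pi.sub_apply, Nat.reduceSub]
  ring

theorem jetEquiv_graph_of_vanishesToOrder_sub_fiberQuartic {G : ℝ × ℝ → ℝ} {w : ℝ → ℝ}
    {a b c d e : ℝ} (hG : ContDiff ℝ ∞ G) (hw : ContDiff ℝ ∞ w) (hw0 : w 0 = 0) (ha : a ≠ 0)
    (he : e ≠ 0)
    (hGw : VanishesToOrder 5 fun p => G p - (w p.1 + fiberQuartic a b c d e p.1 p.2)) :
    JetEquiv 4 (fun p => (p.1, G p)) (fun p => (p.1, p.1 ^ 2 * p.2 + p.2 ^ 4)) := by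
  obtain ⟨s, t, β, γ, u, ht, hu, hnormal⟩ := exists_fiberQuartic_normalization b c d ha he
  let ℓ : ℝ × ℝ → ℝ := fun p => s * p.1 + t * p.2
  let q : ℝ × ℝ → ℝ := fun p => β * (p.1 * p.2) + γ * (p.2 * p.2)
  let K : ℝ × ℝ → ℝ := fun p => u * (p.2 - w p.1 - fiberQuartic a b c d e p.1 (s * p.1))
  have hx : VanishesToOrder 1 fun p : ℝ × ℝ => p.1 := .of_apply_zero contDiff_fst rfl
  have hy : VanishesToOrder 1 fun p : ℝ × ℝ => p.2 := .of_apply_zero contDiff_snd rfl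
  have hℓ : VanishesToOrder 1 ℓ := .of_apply_zero (by fun_prop) (by simp [ℓ])
  have hq : VanishesToOrder 2 q :=
    ((VanishesToOrder.of_contDiff contDiff_const).mul (hx.mul hy)).add
      ((VanishesToOrder.of_contDiff contDiff_const).mul (hy.mul hy))
  have hm : VanishesToOrder 1 (ℓ + q) := hℓ.add (hq.mono one_le_two)
  have hφ : IsDiffeoGerm fun p => (p.1, (ℓ + q) p) :=
    isDiffeoGerm_graph hm.contDiff hm.apply_zero <| by
      rw [pdy_eq_deriv (hm.contDiff.differentiable (by simp) 0)]
      simp only [ℓ, q, Pi.add_apply, Prod.fst_zero, Prod.snd_zero, mul_zero, zero_mul, zero_add]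
      rw [deriv_fun_add (by fun_prop) (by fun_prop)]
      simpa [deriv_fun_mul] using ht
  have hK : ContDiff ℝ ∞ K := by
    simp only [K, fiberQuartic]
    fun_prop
  have hψ : IsDiffeoGerm fun p => (p.1, K p) :=
    isDiffeoGerm_graph hK (by simp [K, fiberQuartic, hw0]) <| by
      rw [pdy_eq_deriv (hK.differentiable (by simp) 0)]
      simpa [K] using hu
  refine (jetEquiv_iff_exists_vanishesToOrder (by fun_prop) (by fun_prop)).2 ⟨_, _, hφ, hψ, ?_⟩
  have hR := ((hGw.comp hφ.contDiff hφ.map_zero).add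
    (vanishesToOrder_fiberQuartic_sub a b c d e hℓ hm (by simpa using hq))).clm_comp
    (u • ContinuousLinearMap.inr ℝ ℝ ℝ)
  convert hR using 1
  funext p
  refine Prod.ext (by simp) ?_
  simp only [Pi.add_apply, Pi.sub_apply, Function.comp_apply, Prod.mk_sub_mk, smul_apply,
    add_sub_cancel_left, ContinuousLinearMap.inr_apply, Prod.smul_mk, smul_eq_mul, K, ℓ, q]
  linear_combination hnormal p.1 p.2

theorem jetEquiv_graph_of_isA2Along_pdy {G : ℝ × ℝ → ℝ} (hG : ContDiff ℝ ∞ G) (hG0 : G 0 = 0)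
    {s : ℝ} (hs : s ≠ 0) (hA2 : IsA2Along (pdy G) (0, s)) :
    JetEquiv 4 (fun p => (p.1, G p)) (fun p => (p.1, p.1 ^ 2 * p.2 + p.2 ^ 4)) := by
  obtain ⟨-, -, -, -, -, h21, h04⟩ := (isA2Along_pdy_iff_tcoeff hG hs).1 hA2
  refine jetEquiv_graph_of_vanishesToOrder_sub_fiberQuartic
    (w := fun x => tcoeff G 1 0 * x + tcoeff G 2 0 * x ^ 2 + tcoeff G 3 0 * x ^ 3 +
      tcoeff G 4 0 * x ^ 4) hG (by fun_prop) (by simp) h21 h04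
    (vanishesToOrder_sub_fiberQuartic hG hG0 hs hA2)

end normalForm

section prenormalForm

variable {E F : Type*} [NormedAddCommGroup E] [NormedSpace ℝ E]
  [NormedAddCommGroup F] [NormedSpace ℝ F]

theorem exists_contDiff_eventuallyEq [HasContDiffBump E] {h : E → F} {x : E}
    (hh : ∀ᶠ p in 𝓝 x, ContDiffAt ℝ ∞ h p) : ∃ g, ContDiff ℝ ∞ g ∧ g =ᶠ[𝓝 x] h := by
  obtain ⟨ε, hε, hball⟩ := Metric.eventually_nhds_iff_ball.1 hh
  let b : ContDiffBump x := ⟨ε / 3, ε / 2, by positivity, by linarith⟩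
  refine ⟨fun p => b p • h p, contDiff_iff_contDiffAt.2 fun p => ?_, ?_⟩
  · by_cases hp : p ∈ Metric.ball x ε
    · exact b.contDiffAt.smul (hball p hp)
    · have hp_supp : p ∉ tsupport b := fun hmem => hp <| by
        rw [b.tsupport_eq] at hmem
        exact Metric.closedBall_subset_ball (half_lt_self hε) hmem
      refine (contDiffAt_const (c := (0 : F))).congr_of_eventuallyEq ?_
      filter_upwards [notMem_tsupport_iff_eventuallyEq.1 hp_supp] with q hq
      simp [hq]
  · filter_upwards [b.eventuallyEq_one] with p hp
    simp [hp]

theorem IsDiffeoGerm.exists_rightInverse [HasContDiffBump E] [CompleteSpace E] {Φ : E → E}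
    (hΦ : IsDiffeoGerm Φ) :
    ∃ χ, IsDiffeoGerm χ ∧ (∀ᶠ p in 𝓝 0, Φ (χ p) = p) ∧
      ∀ u, fderiv ℝ χ 0 (fderiv ℝ Φ 0 u) = u := by
  obtain ⟨A, hA⟩ : ∃ A : E ≃L[ℝ] E, (A : E →L[ℝ] E) = fderiv ℝ Φ 0 :=
    ⟨.ofBijective _ (LinearMap.ker_eq_bot.2 hΦ.bijective_fderiv.1)
      (LinearMap.range_eq_top.2 hΦ.bijective_fderiv.2), rfl⟩
  have hstrict : HasStrictFDerivAt Φ (A : E →L[ℝ] E) 0 :=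
    hA ▸ hΦ.contDiff.contDiffAt.hasStrictFDerivAt (by simp)
  let e := hstrict.toOpenPartialHomeomorph Φ
  have he_target : ∀ᶠ p in 𝓝 (0 : E), p ∈ e.target :=
    e.open_target.mem_nhds (hΦ.map_zero ▸ hstrict.image_mem_toOpenPartialHomeomorph_target)
  have he_symm_tendsto : Tendsto e.symm (𝓝 0) (𝓝 0) := by
    have h := hstrict.localInverse_tendsto
    rwa [hΦ.map_zero] at h
  have hinvertible : ∀ᶠ q in 𝓝 0, ∃ B : E ≃L[ℝ] E, (B : E →L[ℝ] E) = fderiv ℝ Φ q :=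
    ((hΦ.contDiff.continuous_fderiv (by simp)).tendsto 0).eventually (hA ▸ A.nhds)
  have he_symm : ∀ᶠ p in 𝓝 0, ContDiffAt ℝ ∞ e.symm p := by
    filter_upwards [he_target, he_symm_tendsto.eventually hinvertible] with p hp ⟨B, hB⟩
    exact e.contDiffAt_symm hp (hB ▸ (hΦ.differentiable _).hasFDerivAt) hΦ.contDiff.contDiffAt
  obtain ⟨χ, hχ, hχe⟩ := exists_contDiff_eventuallyEq he_symm
  have hχ0 : χ 0 = 0 := by
    rw [hχe.self_of_nhds]
    have h := hstrict.eventually_left_inverse.self_of_nhds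
    rwa [hΦ.map_zero] at h
  have hΦχ : Φ ∘ χ =ᶠ[𝓝 0] id := by
    filter_upwards [hΦ.map_zero ▸ hstrict.eventually_right_inverse, hχe] with p hp hq
    rw [Function.comp_apply, hq]
    exact hp
  have hD : (fderiv ℝ Φ 0).comp (fderiv ℝ χ 0) = .id ℝ E := by
    rw [← fderiv_id (𝕜 := ℝ) (x := (0 : E)), ← hΦχ.fderiv_eq,
      fderiv_comp 0 (hΦ.differentiable _) (hχ.differentiable (by simp) _), hχ0]
  have hright : Function.RightInverse (fderiv ℝ χ 0) (fderiv ℝ Φ 0) := DFunLike.congr_fun hD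
  have hleft := hright.leftInverse_of_injective hΦ.bijective_fderiv.injective
  exact ⟨χ, ⟨hχ, hχ0, hright.injective, hleft.surjective⟩, hΦχ, hleft⟩

theorem exists_isDiffeoGerm_comp_eq_fst {g : ℝ × ℝ → ℝ} (hg : ContDiff ℝ ∞ g) (hg0 : g 0 = 0)
    (hDg : fderiv ℝ g 0 ≠ 0) {v : ℝ × ℝ} (hv : v ≠ 0) (hgv : fderiv ℝ g 0 v = 0) :
    ∃ χ s, IsDiffeoGerm χ ∧ (∀ᶠ p in 𝓝 0, g (χ p) = p.1) ∧ s ≠ 0 ∧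
      fderiv ℝ χ 0 (0, s) = v := by
  have hgd := hg.differentiable (by simp)
  -- The second coordinate is dual to the gradient, so the Jacobian determinant is `|∇g(0)|²`.
  let m : ℝ × ℝ →L[ℝ] ℝ :=
    pdx g 0 • ContinuousLinearMap.snd ℝ ℝ ℝ - pdy g 0 • ContinuousLinearMap.fst ℝ ℝ ℝ
  let Φ : ℝ × ℝ → ℝ × ℝ := fun p => (g p, m p)
  have hDΦ : fderiv ℝ Φ 0 = (fderiv ℝ g 0).prod m :=
    ((hgd 0).hasFDerivAt.prodMk m.hasFDerivAt).fderiv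
  have hjac : jacDet Φ 0 = pdx g 0 ^ 2 + pdy g 0 ^ 2 := by
    simp only [jacDet, hDΦ, m, pdx, pdy, dop, ContinuousLinearMap.prod_apply, sub_apply,
      smul_apply, ContinuousLinearMap.coe_fst', ContinuousLinearMap.coe_snd', smul_eq_mul]
    ring
  have hjac0 : jacDet Φ 0 ≠ 0 := by
    rw [Ne, fderiv_eq_zero_iff_pdx_pdy] at hDg
    contrapose! hDg
    rw [hjac] at hDg
    constructor <;> nlinarith [sq_nonneg (pdx g 0), sq_nonneg (pdy g 0)]
  have hΦ : IsDiffeoGerm Φ :=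
    ⟨hg.prodMk m.contDiff, by simp [Φ, hg0], bijective_fderiv_iff_jacDet_ne_zero.2 hjac0⟩
  obtain ⟨χ, hχ, hΦχ, hχΦ⟩ := hΦ.exists_rightInverse
  have hΦv : fderiv ℝ Φ 0 v = (0, m v) := by rw [hDΦ, ContinuousLinearMap.prod_apply, hgv]
  refine ⟨χ, m v, hχ, hΦχ.mono fun p hp => congrArg Prod.fst hp, fun hmv => hv ?_, hΦv ▸ hχΦ v⟩
  rw [← hχΦ v, hΦv, hmv, Prod.mk_zero_zero, map_zero]

theorem exists_isDiffeoGerm_comp_eq_graph {f : ℝ × ℝ → ℝ × ℝ} (hf : ContDiff ℝ ∞ f)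
    (hf0 : f 0 = 0) (hDf : fderiv ℝ f 0 ≠ 0) {v : ℝ × ℝ} (hv : v ≠ 0)
    (hfv : fderiv ℝ f 0 v = 0) :
    ∃ S χ : ℝ × ℝ → ℝ × ℝ, ∃ G : ℝ × ℝ → ℝ, ∃ s : ℝ, IsDiffeoGerm S ∧ IsDiffeoGerm χ ∧
      ContDiff ℝ ∞ G ∧ G 0 = 0 ∧ S ∘ f ∘ χ =ᶠ[𝓝 0] (fun p => (p.1, G p)) ∧ s ≠ 0 ∧
      fderiv ℝ χ 0 (0, s) = v := by
  have hD (L : ℝ × ℝ →L[ℝ] ℝ) : fderiv ℝ (L ∘ f) 0 = L.comp (fderiv ℝ f 0) :=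
    (L.hasFDerivAt.comp 0 (hf.differentiable (by simp) 0).hasFDerivAt).fderiv
  let X := ContinuousLinearMap.fst ℝ ℝ ℝ
  obtain ⟨S, hS⟩ : ∃ S : (ℝ × ℝ) ≃L[ℝ] (ℝ × ℝ),
      (X.comp (S : ℝ × ℝ →L[ℝ] ℝ × ℝ)).comp (fderiv ℝ f 0) ≠ 0 := by
    by_contra! hall
    have h1 (u : ℝ × ℝ) := DFunLike.congr_fun (hall (.refl ℝ _)) u
    have h2 (u : ℝ × ℝ) := DFunLike.congr_fun (hall (.prodComm ℝ ℝ ℝ)) u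
    exact hDf (ContinuousLinearMap.ext fun u => Prod.ext (h1 u) (h2 u))
  rw [← hD] at hS
  obtain ⟨χ, s, hχ, hfst, hs, hχs⟩ := exists_isDiffeoGerm_comp_eq_fst
    ((ContinuousLinearMap.contDiff _).comp hf) (by simp [hf0]) hS hv
    (by rw [hD, ContinuousLinearMap.comp_apply, hfv, map_zero])
  exact ⟨S, χ, fun p => (S (f (χ p))).2, s, isDiffeoGerm_of_continuousLinearEquiv S, hχ,
    (S.contDiff.comp (hf.comp hχ.contDiff)).snd, by simp [hχ.map_zero, hf0],
    hfst.mono fun p hp => Prod.ext hp rfl, hs, hχs⟩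

end prenormalForm

section jetEquivIff

theorem jacDet_eq_zero_and_fderiv_ne_zero_of_corankOne {f : ℝ × ℝ → ℝ × ℝ} (h : CorankOne f) :
    jacDet f 0 = 0 ∧ fderiv ℝ f 0 ≠ 0 := by
  refine ⟨by_contra fun hjac => ?_, fun hDf => ?_⟩
  · have hrank : LinearMap.rank (fderiv ℝ f 0).toLinearMap = Module.rank ℝ (ℝ × ℝ) :=
      rank_range_of_surjective _ (bijective_fderiv_iff_jacDet_ne_zero.2 hjac).surjective
    rw [h, rank_prod', Module.rank_self, one_add_one_eq_two] at hrank
    exact absurd hrank (by norm_num)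
  · rw [CorankOne, hDf, ContinuousLinearMap.toLinearMap_zero, LinearMap.rank_zero] at h
    exact zero_ne_one h

theorem isA2Along_jacDet_of_jetEquiv {f : ℝ × ℝ → ℝ × ℝ} (hf : ContDiff ℝ ∞ f) (hf0 : f 0 = 0)
    {v : ℝ × ℝ} (hv : v ≠ 0) (hfv : fderiv ℝ f 0 v = 0)
    (h : JetEquiv 4 f (fun p => (p.1, p.1 ^ 2 * p.2 + p.2 ^ 4))) : IsA2Along (jacDet f) v := by
  let K : ℝ × ℝ → ℝ := fun p => p.1 ^ 2 * p.2 + p.2 ^ 4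
  have hK : ContDiff ℝ ∞ K := by fun_prop
  have hmodel : ContDiff ℝ ∞ fun p => (p.1, K p) := contDiff_fst.prodMk hK
  obtain ⟨φ, ψ, hφ, hψ, hjet⟩ := (jetEquiv_iff_exists_vanishesToOrder hf hmodel).1 h
  have hfφ : ContDiff ℝ ∞ (f ∘ φ) := hf.comp hφ.contDiff
  have hcomp : ContDiff ℝ ∞ (ψ ∘ f ∘ φ) := hψ.contDiff.comp hfφ
  obtain ⟨u, rfl⟩ := hφ.bijective_fderiv.surjective v
  have hDmodel : fderiv ℝ (fun p => (p.1, K p)) 0 u = 0 := by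
    rw [← sub_eq_zero.1 (hjet.fderiv_sub hcomp hmodel).apply_zero,
      fderiv_comp 0 (hψ.differentiable _) (hfφ.differentiable (by simp) 0),
      fderiv_comp 0 (hf.differentiable (by simp) _) (hφ.differentiable 0), hφ.map_zero]
    simp [hfv]
  have hu1 : u.1 = 0 := by
    rw [(hasFDerivAt_fst.prodMk (hK.differentiable (by simp) 0).hasFDerivAt).fderiv] at hDmodel
    exact congrArg Prod.fst hDmodel
  have hu2 : u.2 ≠ 0 := fun hu2 => hv <| by
    rw [show u = 0 from Prod.ext hu1 hu2, map_zero]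
  have hjac : jacDet (fun p => (p.1, K p)) = pdy K :=
    funext fun p => jacDet_graph (hK.differentiable (by simp) p)
  rw [← isA2Along_jacDet_comp hf hf0 hφ hψ, isA2Along_congr (contDiff_jacDet hcomp)
    (contDiff_jacDet hmodel) (vanishesToOrder_jacDet_sub hcomp hmodel hjet),
    hjac, show u = (0, u.2) from Prod.ext hu1 rfl, isA2Along_pdy_iff_tcoeff hK hu2]
  have hcoeff (i j : ℕ) : tcoeff K i j =
      (if i = 2 ∧ j = 1 then 1 else 0) + if i = 0 ∧ j = 4 then 1 else 0 := by
    rw [← tcoeff_monomial, ← tcoeff_monomial, ← tcoeff_add (by fun_prop) (by fun_prop)]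
    simp [K, Pi.add_def]
  simp [hcoeff]

theorem jetEquiv_of_isA2Along_jacDet {f : ℝ × ℝ → ℝ × ℝ} (hf : ContDiff ℝ ∞ f) (hf0 : f 0 = 0)
    (hDf : fderiv ℝ f 0 ≠ 0) {v : ℝ × ℝ} (hv : v ≠ 0) (hfv : fderiv ℝ f 0 v = 0)
    (h : IsA2Along (jacDet f) v) :
    JetEquiv 4 f (fun p => (p.1, p.1 ^ 2 * p.2 + p.2 ^ 4)) := by
  obtain ⟨S, χ, G, s, hS, hχ, hG, hG0, hgraph, hs, rfl⟩ :=
    exists_isDiffeoGerm_comp_eq_graph hf hf0 hDf hv hfv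
  have hSfχ : ContDiff ℝ ∞ (S ∘ f ∘ χ) := hS.contDiff.comp (hf.comp hχ.contDiff)
  have hpdyG : ContDiff ℝ ∞ (pdy G) := contDiff_pdy hG
  have hjac : jacDet (S ∘ f ∘ χ) =ᶠ[𝓝 0] pdy G := (jacDet_eventuallyEq hgraph).trans <|
    .of_eq (funext fun p => jacDet_graph (hG.differentiable (by simp) p))
  have hflat : VanishesToOrder 4 (jacDet (S ∘ f ∘ χ) - pdy G) :=
    (vanishesToOrder_sub_iff (contDiff_jacDet hSfχ) hpdyG).2 fun i _ =>
      (hjac.iteratedFDeriv ℝ i).self_of_nhds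
  rw [← isA2Along_jacDet_comp hf hf0 hχ hS,
    isA2Along_congr (contDiff_jacDet hSfχ) hpdyG hflat] at h
  exact jetEquiv_of_comp hχ hS
    (JetEquiv.congr_left hgraph.symm (jetEquiv_graph_of_isA2Along_pdy hG hG0 hs h))

end jetEquivIff

theorem stmt16_general (f η : ℝ × ℝ → ℝ × ℝ) (hf : ContDiff ℝ ∞ f) (hf0 : f 0 = 0)
    (hcr : CorankOne f) (hη : ContDiffAt ℝ 2 η 0) (hη0 : η 0 ≠ 0)
    (hker : fderiv ℝ f 0 (η 0) = 0) :
    JetEquiv 4 f (fun p => (p.1, p.1 ^ 2 * p.2 + p.2 ^ 4)) ↔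
      (fderiv ℝ (jacDet f) 0 = 0 ∧ (hess (jacDet f)).rank = 1 ∧
        etaIter η 2 (jacDet f) 0 = 0 ∧ etaIter η 3 (jacDet f) 0 ≠ 0) := by
  obtain ⟨hjac0, hDf⟩ := jacDet_eq_zero_and_fderiv_ne_zero_of_corankOne hcr
  rw [← isA2Along_iff_etaIter (contDiff_jacDet hf) hjac0 hη hη0]
  exact ⟨isA2Along_jacDet_of_jetEquiv hf hf0 hη0 hker,
    jetEquiv_of_isA2Along_jacDet hf hf0 hDf hη0 hker⟩

theorem stmt16 (f η : ℝ × ℝ → ℝ × ℝ)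
    (hf : ContDiff ℝ (⊤ : ℕ∞) f) (hf0 : f 0 = 0) (hcr : CorankOne f)
    (hη : IsNullVF f η) :
    JetEquiv 4 f (fun p => (p.1, p.1 ^ 2 * p.2 + p.2 ^ 4)) ↔
      (fderiv ℝ (jacDet f) 0 = 0 ∧ (hess (jacDet f)).rank = 1 ∧
        etaIter η 2 (jacDet f) 0 = 0 ∧ etaIter η 3 (jacDet f) 0 ≠ 0) := by
  obtain ⟨hη0, U, hU, hηU, hnull⟩ := hη
  exact stmt16_general f η hf hf0 hcr ((hηU.contDiffAt hU).of_le ENat.LEInfty.out) hη0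
    (hnull 0 (mem_of_mem_nhds hU) (jacDet_eq_zero_and_fderiv_ne_zero_of_corankOne hcr).1)
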